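/- Let p > 2 be a prime and a, b integers with p ∤ a, and assume p does not divide T^{a,b}_n for any n < p. Then the natural density of {n ∈ ℕ : p ∣ M^{a,b}_n} exists and equals |{n < p−2 : p ∣ M^{a,b}_n}|/p + 2·|{m < p−1 : b·T^{a,b}_m ≡ T^{a,b}_{p−1}·T^{a,b}_{m+1} (mod p)}|/((p−1)(p+1)) + 2·|{m < p−1 : b·T^{a,b}_m ≡ T^{a,b}_{m+1} (mod p)}|/((p−1)p(p+1)). -/

import Mathlib

open Polynomial Filter

/-- The generalized central trinomial coefficient `T^{a,b}_n`:
the coefficient of `X^n` in `(a + bX + aX^2)^n`. -/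
noncomputable def genTrinomial (a b : ℤ) (n : ℕ) : ℤ :=
  ((C a + C b * X + C a * X ^ 2) ^ n).coeff n

/-- The generalized Motzkin number `M^{a,b}_n`:
the coefficient of `X^n` in `(a + bX + aX^2)^n * (1 - X^2)`. -/
noncomputable def genMotzkin (a b : ℤ) (n : ℕ) : ℤ :=
  (((C a + C b * X + C a * X ^ 2) ^ n) * (1 - X ^ 2)).coeff n

/-!
With `P = a T⁻¹ + b + a T`, `T_n` is the constant term of `Pⁿ` and `M_n` that of `Pⁿ (1 - T²)`.
Over any commutative ring `2 a² M_n = 2 b T_{n+1} - T_{n+2} - D T_n`, where `D = b² - 4 a²`.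
Modulo `p` there are the Lucas congruence `T_{pn+r} = T_n T_r` and the reflection
`Dᵏ T_{p-1-k} = T_{p-1} T_k`; in particular `χ = T_{p-1}` satisfies `χ² = 1`. Hence, if no `T_n`
vanishes modulo `p`, the vanishing of `M_{pn+r}` does not depend on `n` when `r < p - 2`, while for
`r = p - 2` and `r = p - 1` it is an equation between the ratio `T_{n+1} / T_n` and a constant.

The set of `n` with `v T_{n+1} = u T_n` is self-similar: by Lucas, it has the same trace on each
block `[pn, pn + p)`, except that `pn + (p - 1)` lies in it exactly when `n` solves the equation
for `(u χ, v)`. Iterating the two equations for `(u, v)` and `(u χ, v)` yields a contraction that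
determines both densities, and reflection identifies the counts belonging to `r = p - 1` with
those belonging to `r = p - 2`.
-/

open AddMonoidAlgebra (single)
open scoped LaurentPolynomial

section TrinomialCoefficients

variable {R : Type*} [CommRing R] (a b : R)

/-- The symmetric Laurent trinomial `a T⁻ᵏ + b + a Tᵏ`. For `k = 1` its powers carry all the
coefficients studied here; the other steps `k` occur because the Frobenius multiplies the step
by `p`. -/
noncomputable def symTrinomial (k : ℤ) : R[T;T⁻¹] :=
  single (-k) a + single 0 b + single k a

/-- The coefficient of `Tʲ` in `(a T⁻¹ + b + a T)ⁿ`, that is, of `X ^ (n + j)` in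
`(a + b X + a X ^ 2) ^ n`. -/
noncomputable def trinomialCoeff (n : ℕ) (j : ℤ) : R :=
  (symTrinomial a b 1 ^ n).coeff j

/-- The generalized central trinomial coefficient over a commutative ring: the constant term of
`(a T⁻¹ + b + a T)ⁿ`. -/
noncomputable def centralTrinomial (n : ℕ) : R :=
  trinomialCoeff a b n 0

/-- The generalized Motzkin number over a commutative ring: the constant term of
`(a T⁻¹ + b + a T)ⁿ (1 - T²)`, written by means of the symmetry `T ↔ T⁻¹`. -/
noncomputable def motzkin (n : ℕ) : R :=
  trinomialCoeff a b n 0 - trinomialCoeff a b n 2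

lemma coeff_mul_single (f : R[T;T⁻¹]) (k j : ℤ) (c : R) :
    (f * single k c).coeff j = c * f.coeff (j - k) := by
  rw [mul_comm c, ← AddMonoidAlgebra.coeff_mul_single_add, sub_add_cancel]

lemma coeff_mul_symTrinomial (f : R[T;T⁻¹]) (k j : ℤ) :
    (f * symTrinomial a b k).coeff j =
      a * f.coeff (j - k) + b * f.coeff j + a * f.coeff (j + k) := by
  simp only [symTrinomial, mul_add, AddMonoidAlgebra.coeff_add, Finsupp.add_apply,
    coeff_mul_single, sub_neg_eq_add, sub_zero]
  ring

lemma invert_symTrinomial (k : ℤ) :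
    LaurentPolynomial.invert (symTrinomial a b k) = symTrinomial a b k := by
  simp only [symTrinomial, LaurentPolynomial.single_eq_C_mul_T, map_add, map_mul,
    LaurentPolynomial.invert_C, LaurentPolynomial.invert_T, neg_neg, neg_zero]
  ring

lemma trinomialCoeff_zero (j : ℤ) : trinomialCoeff a b 0 j = if j = 0 then 1 else 0 := by
  rw [trinomialCoeff, pow_zero, ← LaurentPolynomial.T_zero, LaurentPolynomial.T_apply]
  simp only [eq_comm]

lemma trinomialCoeff_succ (n : ℕ) (j : ℤ) :
    trinomialCoeff a b (n + 1) j = a * trinomialCoeff a b n (j - 1) + b * trinomialCoeff a b n j +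
      a * trinomialCoeff a b n (j + 1) := by
  rw [trinomialCoeff, pow_succ, coeff_mul_symTrinomial]
  rfl

lemma trinomialCoeff_neg (n : ℕ) (j : ℤ) : trinomialCoeff a b n (-j) = trinomialCoeff a b n j := by
  rw [trinomialCoeff, ← LaurentPolynomial.invert_apply, map_pow, invert_symTrinomial,
    ← trinomialCoeff]

lemma trinomialCoeff_eq_zero {n : ℕ} {j : ℤ} (h : n < j.natAbs) : trinomialCoeff a b n j = 0 := by
  induction n generalizing j with
  | zero => rw [trinomialCoeff_zero, if_neg (by omega)]
  | succ n ih => rw [trinomialCoeff_succ, ih (by omega), ih (by omega), ih (by omega)]; ring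

lemma map_trinomialCoeff {S : Type*} [CommRing S] (f : R →+* S) (n : ℕ) (j : ℤ) :
    f (trinomialCoeff a b n j) = trinomialCoeff (f a) (f b) n j := by
  induction n generalizing j with
  | zero => simp [trinomialCoeff_zero, apply_ite f]
  | succ n ih => simp [trinomialCoeff_succ, ih]

-- This compares the coefficients of `Tʲ` in `T d/dT (Pⁿ⁺¹) = (n + 1) Pⁿ (T dP/dT)`.
lemma intCast_mul_trinomialCoeff_succ (n : ℕ) (j : ℤ) :
    j * trinomialCoeff a b (n + 1) j =
      (n + 1) * a * (trinomialCoeff a b n (j - 1) - trinomialCoeff a b n (j + 1)) := by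
  induction n generalizing j with
  | zero =>
    simp only [trinomialCoeff_succ, trinomialCoeff_zero]
    rcases eq_or_ne j 0 with rfl | h₀
    · simp
    rcases eq_or_ne j 1 with rfl | h₁
    · simp
    rcases eq_or_ne j (-1) with rfl | h₂
    · simp
    rw [if_neg (by omega), if_neg h₀, if_neg (by omega)]
    ring
  | succ n ih =>
    have ih_left := ih (j - 1)
    have ih_right := ih (j + 1)
    have succ_left := trinomialCoeff_succ a b n (j - 1)
    have succ_right := trinomialCoeff_succ a b n (j + 1)
    rw [sub_add_cancel] at ih_left succ_left
    rw [add_sub_cancel_right] at ih_right succ_right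
    rw [trinomialCoeff_succ a b (n + 1) j]
    push_cast at *
    linear_combination a * ih_left + b * ih j + a * ih_right - (n + 1) * a * succ_left +
      (n + 1) * a * succ_right

lemma centralTrinomial_zero : centralTrinomial a b 0 = 1 := by
  simp [centralTrinomial, trinomialCoeff_zero]

lemma centralTrinomial_one : centralTrinomial a b 1 = b := by
  simp [centralTrinomial, trinomialCoeff_succ, trinomialCoeff_zero]

lemma centralTrinomial_succ (n : ℕ) :
    centralTrinomial a b (n + 1) =
      b * centralTrinomial a b n + 2 * a * trinomialCoeff a b n 1 := by
  simp only [centralTrinomial, trinomialCoeff_succ, zero_sub, zero_add, trinomialCoeff_neg]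
  ring

lemma trinomialCoeff_succ_one (n : ℕ) :
    trinomialCoeff a b (n + 1) 1 = (n + 1) * a * motzkin a b n := by
  simpa [motzkin] using intCast_mul_trinomialCoeff_succ a b n 1

lemma two_mul_sq_mul_motzkin (n : ℕ) :
    2 * a ^ 2 * motzkin a b n = 2 * b * centralTrinomial a b (n + 1) -
      centralTrinomial a b (n + 2) - discrim a b a * centralTrinomial a b n := by
  have h_one : trinomialCoeff a b (n + 1) 1 = a * trinomialCoeff a b n 0 +
      b * trinomialCoeff a b n 1 + a * trinomialCoeff a b n 2 := trinomialCoeff_succ a b n 1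
  rw [centralTrinomial_succ a b (n + 1), h_one, centralTrinomial_succ, centralTrinomial, motzkin,
    discrim]
  ring

lemma add_two_mul_centralTrinomial_add_two (n : ℕ) :
    (n + 2) * centralTrinomial a b (n + 2) =
      (2 * n + 3) * b * centralTrinomial a b (n + 1) -
        (n + 1) * discrim a b a * centralTrinomial a b n := by
  have h_succ := centralTrinomial_succ a b (n + 1)
  rw [trinomialCoeff_succ_one] at h_succ
  linear_combination h_succ + (n + 1) * two_mul_sq_mul_motzkin a b n

lemma toLaurent_trinomial_pow (n : ℕ) :
    toLaurent ((C a + C b * X + C a * X ^ 2) ^ n) = symTrinomial a b 1 ^ n * single (n : ℤ) 1 := by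
  have h_one : toLaurent (C a + C b * X + C a * X ^ 2) = symTrinomial a b 1 * single 1 1 := by
    simp [symTrinomial, add_mul, LaurentPolynomial.single_eq_C_mul_T]
  rw [map_pow, h_one, mul_pow, AddMonoidAlgebra.single_pow, one_pow, nsmul_one]

lemma coeff_toLaurent_natCast (f : R[X]) (n : ℕ) : (toLaurent f).coeff n = f.coeff n :=
  Finsupp.mapDomain_apply Nat.cast_injective _ _

lemma coeff_trinomial_pow (n : ℕ) :
    ((C a + C b * X + C a * X ^ 2) ^ n).coeff n = centralTrinomial a b n := by
  rw [← coeff_toLaurent_natCast, toLaurent_trinomial_pow, coeff_mul_single, sub_self, one_mul,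
    centralTrinomial, trinomialCoeff]

lemma coeff_trinomial_pow_mul_one_sub_sq (n : ℕ) :
    ((C a + C b * X + C a * X ^ 2) ^ n * (1 - X ^ 2)).coeff n = motzkin a b n := by
  rw [mul_sub, mul_one, coeff_sub, coeff_trinomial_pow, ← coeff_toLaurent_natCast, map_mul,
    toLaurent_X_pow, LaurentPolynomial.T, toLaurent_trinomial_pow, coeff_mul_single,
    coeff_mul_single, one_mul, one_mul, sub_sub_cancel_left, ← trinomialCoeff, Nat.cast_ofNat,
    trinomialCoeff_neg, centralTrinomial, motzkin]

lemma intCast_genTrinomial (a b : ℤ) (n : ℕ) :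
    (genTrinomial a b n : R) = centralTrinomial (a : R) b n := by
  rw [genTrinomial, coeff_trinomial_pow]
  exact map_trinomialCoeff a b (Int.castRingHom R) n 0

lemma intCast_genMotzkin (a b : ℤ) (n : ℕ) : (genMotzkin a b n : R) = motzkin (a : R) b n := by
  rw [genMotzkin, coeff_trinomial_pow_mul_one_sub_sq, motzkin, Int.cast_sub]
  exact congrArg₂ _ (map_trinomialCoeff a b (Int.castRingHom R) n 0)
    (map_trinomialCoeff a b (Int.castRingHom R) n 2)

end TrinomialCoefficients

section CharP

variable {R : Type*} [CommRing R] {p : ℕ} [CharP R p] (a b : R)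

lemma symTrinomial_pow_char [Fact p.Prime] (k : ℤ) :
    symTrinomial a b k ^ p = symTrinomial (a ^ p) (b ^ p) (p * k) := by
  have : CharP R[T;T⁻¹] p := charP_of_injective_ringHom (f := LaurentPolynomial.C)
    (AddMonoidAlgebra.single_right_injective) p
  simp only [symTrinomial, add_pow_char, AddMonoidAlgebra.single_pow, nsmul_eq_mul, mul_neg,
    mul_zero]

lemma trinomialCoeff_add_char [Fact p.Prime] (n : ℕ) (j : ℤ) :
    trinomialCoeff a b (n + p) j = a ^ p * trinomialCoeff a b n (j - p) +
      b ^ p * trinomialCoeff a b n j + a ^ p * trinomialCoeff a b n (j + p) := by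
  rw [trinomialCoeff, pow_add, symTrinomial_pow_char (p := p), mul_one, coeff_mul_symTrinomial]
  rfl

lemma discrim_pow_mul_centralTrinomial [IsDomain R] {k m : ℕ} (h : k + m = p - 1) :
    discrim a b a ^ k * centralTrinomial a b m =
      centralTrinomial a b (p - 1) * centralTrinomial a b k := by
  have cast_p : (p : R) = 0 := CharP.cast_eq_zero R p
  induction k using Nat.twoStepInduction generalizing m with
  | zero => rw [show m = p - 1 by omega, centralTrinomial_zero, pow_zero, one_mul, mul_one]
  | one =>
    have cast_m : (m : R) = -2 := by
      rw [show p = m + 2 by omega] at cast_p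
      push_cast at cast_p
      linear_combination cast_p
    have h_rec := add_two_mul_centralTrinomial_add_two a b m
    rw [cast_m, show m + 1 = p - 1 by omega] at h_rec
    rw [centralTrinomial_one, pow_one]
    linear_combination -h_rec
  | more k ih ih' =>
    have cast_m : (m : R) = -3 - k := by
      rw [show p = m + k + 3 by omega] at cast_p
      push_cast at cast_p
      linear_combination cast_p
    have cast_ne : (k + 2 : R) ≠ 0 := by
      have h_dvd : ¬ p ∣ k + 2 := Nat.not_dvd_of_pos_of_lt (by omega) (by omega)
      rw [← CharP.cast_eq_zero_iff R p] at h_dvd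
      exact_mod_cast h_dvd
    have h_rec := add_two_mul_centralTrinomial_add_two a b m
    rw [cast_m] at h_rec
    refine mul_left_cancel₀ cast_ne ?_
    linear_combination -discrim a b a ^ (k + 1) * h_rec
      - (k + 1) * discrim a b a * ih (m := m + 2) (by omega)
      + (2 * k + 3) * b * ih' (m := m + 1) (by omega)
      - centralTrinomial a b (p - 1) * add_two_mul_centralTrinomial_add_two a b k

lemma centralTrinomial_sub_one_sq [IsDomain R] :
    centralTrinomial a b (p - 1) ^ 2 = discrim a b a ^ (p - 1) := by
  rw [sq, ← discrim_pow_mul_centralTrinomial a b (add_zero (p - 1)), centralTrinomial_zero, mul_one]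

end CharP

section ZMod

variable {p : ℕ} [hp : Fact p.Prime] {a b : ZMod p}

-- Since `Pᵖ = a T⁻ᵖ + b + a Tᵖ`, the coefficients of `Pᵖⁿ⁺ʳ` at the multiples of `p` obey the
-- recurrence in `n` of the coefficients of `Pⁿ`.
lemma trinomialCoeff_mul_add_mul (n : ℕ) {r : ℕ} (hr : r < p) (i : ℤ) :
    trinomialCoeff a b (p * n + r) (p * i) = trinomialCoeff a b n i * trinomialCoeff a b r 0 := by
  induction n generalizing i with
  | zero =>
    rw [mul_zero, zero_add, trinomialCoeff_zero]
    split_ifs with hi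
    · rw [hi, mul_zero, one_mul]
    · rw [zero_mul, trinomialCoeff_eq_zero]
      rw [Int.natAbs_mul, Int.natAbs_natCast]
      exact hr.trans_le (Nat.le_mul_of_pos_right p (Int.natAbs_pos.mpr hi))
  | succ n ih =>
    rw [show p * (n + 1) + r = p * n + r + p by ring, trinomialCoeff_add_char, ZMod.pow_card,
      ZMod.pow_card, ← mul_sub_one, ← mul_add_one, ih, ih, ih, trinomialCoeff_succ]
    ring

lemma centralTrinomial_mul_add (n : ℕ) {r : ℕ} (hr : r < p) :
    centralTrinomial a b (p * n + r) = centralTrinomial a b n * centralTrinomial a b r := by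
  simpa [centralTrinomial] using trinomialCoeff_mul_add_mul n hr 0

lemma centralTrinomial_mul (n : ℕ) : centralTrinomial a b (p * n) = centralTrinomial a b n := by
  simpa [centralTrinomial_zero] using centralTrinomial_mul_add (a := a) (b := b) n hp.out.pos

lemma centralTrinomial_ne_zero (hT : ∀ n < p, centralTrinomial a b n ≠ 0) (n : ℕ) :
    centralTrinomial a b n ≠ 0 := by
  induction n using Nat.strong_induction_on with
  | _ n ih =>
    rcases lt_or_ge n p with h | h
    · exact hT n h
    have h_mod : n % p < p := Nat.mod_lt n hp.out.pos
    rw [← Nat.div_add_mod n p, centralTrinomial_mul_add _ h_mod]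
    exact mul_ne_zero (ih _ (Nat.div_lt_self (hp.out.pos.trans_le h) hp.out.one_lt)) (hT _ h_mod)

lemma discrim_ne_zero (hT : centralTrinomial a b (p - 1) ≠ 0) : discrim a b a ≠ 0 := by
  have h_pow : discrim a b a ^ (p - 1) ≠ 0 := by
    rw [← centralTrinomial_sub_one_sq]
    exact pow_ne_zero 2 hT
  exact (pow_ne_zero_iff (Nat.sub_ne_zero_of_lt hp.out.one_lt)).mp h_pow

lemma centralTrinomial_sub_one_mul_self (hT : centralTrinomial a b (p - 1) ≠ 0) :
    centralTrinomial a b (p - 1) * centralTrinomial a b (p - 1) = 1 := by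
  rw [← sq, centralTrinomial_sub_one_sq, ZMod.pow_card_sub_one_eq_one (discrim_ne_zero hT)]

lemma two_mul_sq_ne_zero (hp2 : 2 < p) (ha : a ≠ 0) : 2 * a ^ 2 ≠ 0 :=
  mul_ne_zero (Ring.two_ne_zero (by rw [ZMod.ringChar_zmod_n]; exact hp2.ne')) (pow_ne_zero 2 ha)

lemma motzkin_mul_add (hp2 : 2 < p) (ha : a ≠ 0) (n : ℕ) {r : ℕ} (hr : r < p - 2) :
    motzkin a b (p * n + r) = centralTrinomial a b n * motzkin a b r := by
  refine mul_left_cancel₀ (two_mul_sq_ne_zero hp2 ha) ?_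
  rw [mul_left_comm, two_mul_sq_mul_motzkin, two_mul_sq_mul_motzkin, add_assoc, add_assoc,
    centralTrinomial_mul_add _ (by omega), centralTrinomial_mul_add _ (by omega),
    centralTrinomial_mul_add _ (by omega)]
  ring

lemma two_mul_sq_mul_motzkin_mul_add_sub_two (n : ℕ) :
    2 * a ^ 2 * motzkin a b (p * n + (p - 2)) =
      b * centralTrinomial a b (p - 1) * centralTrinomial a b n - centralTrinomial a b (n + 1) := by
  have two_le : 2 ≤ p := hp.out.two_le
  have h_refl :
      discrim a b a * centralTrinomial a b (p - 2) = centralTrinomial a b (p - 1) * b := by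
    simpa [centralTrinomial_one] using
      discrim_pow_mul_centralTrinomial a b (show 1 + (p - 2) = p - 1 by omega)
  rw [two_mul_sq_mul_motzkin, show p * n + (p - 2) + 1 = p * n + (p - 1) by omega,
    show p * n + (p - 2) + 2 = p * (n + 1) by rw [mul_add]; omega, centralTrinomial_mul,
    centralTrinomial_mul_add _ (by omega), centralTrinomial_mul_add _ (by omega)]
  linear_combination -centralTrinomial a b n * h_refl

lemma two_mul_sq_mul_motzkin_mul_add_sub_one (n : ℕ) :
    2 * a ^ 2 * motzkin a b (p * n + (p - 1)) =
      b * centralTrinomial a b (n + 1) -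
        discrim a b a * centralTrinomial a b (p - 1) * centralTrinomial a b n := by
  have one_lt : 1 < p := hp.out.one_lt
  rw [two_mul_sq_mul_motzkin, show p * n + (p - 1) + 1 = p * (n + 1) by rw [mul_add]; omega,
    show p * n + (p - 1) + 2 = p * (n + 1) + 1 by rw [mul_add]; omega, centralTrinomial_mul,
    centralTrinomial_mul_add _ one_lt, centralTrinomial_mul_add _ (by omega), centralTrinomial_one]
  ring

end ZMod

section CesaroMean

/-- The sequence `s` has Cesàro mean `c`. For the indicator function of a set of natural numbers
this says that the set has natural density `c`. -/
def HasCesaroMean (s : ℕ → ℝ) (c : ℝ) : Prop :=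
  Tendsto (fun N : ℕ => (∑ i ∈ Finset.range N, s i) / N) atTop (nhds c)

lemma hasCesaroMean_const (c : ℝ) : HasCesaroMean (fun _ => c) c := by
  simpa [HasCesaroMean, div_eq_inv_mul] using (tendsto_const_nhds (x := c)).cesaro

lemma HasCesaroMean.add {s t : ℕ → ℝ} {c d : ℝ} (hs : HasCesaroMean s c)
    (ht : HasCesaroMean t d) : HasCesaroMean (fun i => s i + t i) (c + d) := by
  simpa only [HasCesaroMean, Finset.sum_add_distrib, add_div] using Tendsto.add hs ht

lemma HasCesaroMean.const_mul {s : ℕ → ℝ} {c : ℝ} (r : ℝ) (hs : HasCesaroMean s c) :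
    HasCesaroMean (fun i => r * s i) (r * c) := by
  simpa only [HasCesaroMean, ← Finset.mul_sum, mul_div_assoc] using Tendsto.const_mul r hs

lemma tendsto_zero_of_le_mul_comp_add {ι : Type*} {l : Filter ι} {u δ : ι → ℝ} {g : ι → ι}
    {ρ M : ℝ} (hρ₀ : 0 ≤ ρ) (hρ₁ : ρ < 1) (hg : Tendsto g l l) (hδ : Tendsto δ l (nhds 0))
    (hu₀ : ∀ n, 0 ≤ u n) (huM : ∀ n, u n ≤ M) (h : ∀ n, u n ≤ ρ * u (g n) + δ n) :
    Tendsto u l (nhds 0) := by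
  refine tendsto_order.mpr ⟨fun x hx => .of_forall fun n => hx.trans_le (hu₀ n), fun x hx => ?_⟩
  have h_iter (k : ℕ) : ∀ᶠ n in l, u n ≤ ρ ^ k * M + x / 2 := by
    induction k with
    | zero => exact .of_forall fun n => by linarith [huM n]
    | succ k ih =>
      have hδ_small : ∀ᶠ n in l, δ n < (1 - ρ) * (x / 2) :=
        hδ.eventually_lt_const (mul_pos (sub_pos.mpr hρ₁) (half_pos hx))
      filter_upwards [hg.eventually ih, hδ_small] with n h_ih h_δ
      calc u n ≤ ρ * u (g n) + δ n := h n
        _ ≤ ρ * (ρ ^ k * M + x / 2) + (1 - ρ) * (x / 2) := by gcongr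
        _ = ρ ^ (k + 1) * M + x / 2 := by ring
  have h_pow : Tendsto (fun k : ℕ => ρ ^ k * M) atTop (nhds 0) := by
    simpa using (tendsto_pow_atTop_nhds_zero_of_lt_one hρ₀ hρ₁).mul_const M
  obtain ⟨k, hk⟩ := (h_pow.eventually_lt_const (half_pos hx)).exists
  filter_upwards [h_iter k] with n hn
  linarith

variable {p : ℕ} {s : ℕ → ℝ} {B : ℝ}

lemma sum_range_mul {M : Type*} [AddCommMonoid M] (f : ℕ → M) (p N : ℕ) :
    ∑ i ∈ Finset.range (p * N), f i =
      ∑ i ∈ Finset.range N, ∑ r ∈ Finset.range p, f (p * i + r) := by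
  induction N with
  | zero => simp
  | succ N ih => rw [mul_add, mul_one, Finset.sum_range_add, ih, Finset.sum_range_succ]

lemma abs_sum_range_sub_sum_block_le (hp : 0 < p) (hs : ∀ i, |s i| ≤ B) (N : ℕ) :
    |∑ i ∈ Finset.range N, s i -
      ∑ i ∈ Finset.range (N / p), ∑ r ∈ Finset.range p, s (p * i + r)| ≤ p * B := by
  have h_tail : ∑ i ∈ Finset.range N, s i -
      ∑ i ∈ Finset.range (N / p), ∑ r ∈ Finset.range p, s (p * i + r) =
      ∑ r ∈ Finset.range (N % p), s (p * (N / p) + r) := by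
    conv_lhs => enter [1, 1]; rw [← Nat.div_add_mod N p]
    rw [Finset.sum_range_add, sum_range_mul, add_sub_cancel_left]
  have hB : 0 ≤ B := (abs_nonneg _).trans (hs 0)
  calc _ ≤ ∑ _ ∈ Finset.range (N % p), B := by
        rw [h_tail]
        exact (Finset.abs_sum_le_sum_abs _ _).trans (Finset.sum_le_sum fun _ _ => hs _)
    _ = (N % p : ℕ) * B := by simp
    _ ≤ p * B := by gcongr; exact (Nat.mod_lt N hp).le

lemma tendsto_natCast_div_div_natCast (p : ℕ) :
    Tendsto (fun N : ℕ => ((N / p : ℕ) : ℝ) / N) atTop (nhds (p : ℝ)⁻¹) := by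
  have h := (tendsto_nat_floor_mul_div_atTop (inv_nonneg.mpr p.cast_nonneg)).comp
    (tendsto_natCast_atTop_atTop (R := ℝ))
  refine h.congr fun N => ?_
  rw [Function.comp_apply, inv_mul_eq_div, Nat.floor_div_eq_div]

lemma HasCesaroMean.of_sum_block {d : ℝ} (hp : 0 < p) (hs : ∀ i, |s i| ≤ B)
    (h : HasCesaroMean (fun i => ∑ r ∈ Finset.range p, s (p * i + r)) d) :
    HasCesaroMean s (d / p) := by
  let S (N : ℕ) := ∑ i ∈ Finset.range N, s i
  let S' (N : ℕ) := ∑ i ∈ Finset.range N, ∑ r ∈ Finset.range p, s (p * i + r)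
  have h_error : Tendsto (fun N : ℕ => (S N - S' (N / p)) / N) atTop (nhds 0) := by
    refine squeeze_zero_norm (fun N => ?_) (tendsto_const_div_atTop_nhds_zero_nat (p * B))
    rw [Real.norm_eq_abs, abs_div, Nat.abs_cast]
    gcongr
    exact abs_sum_range_sub_sum_block_le hp hs N
  have h_blocks : Tendsto (fun N : ℕ => S' (N / p) / (N / p : ℕ) * ((N / p : ℕ) / N)) atTop
      (nhds (d * (p : ℝ)⁻¹)) :=
    (h.comp (Nat.tendsto_div_const_atTop hp.ne')).mul (tendsto_natCast_div_div_natCast p)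
  rw [div_eq_mul_inv, ← zero_add (d * _)]
  refine (h_error.add h_blocks).congr fun N => ?_
  rcases Nat.eq_zero_or_pos (N / p) with h_zero | h_pos
  · simp [h_zero, S, S']
  · field_simp
    simp [S]

lemma hasCesaroMean_zero_of_sum_block {ε : ℝ} (hε : |ε| < p) (hs : ∀ i, |s i| ≤ B)
    (h : ∀ i, ∑ r ∈ Finset.range p, s (p * i + r) = ε * s i) : HasCesaroMean s 0 := by
  have hp : (0 : ℝ) < p := (abs_nonneg ε).trans_lt hε
  let S (N : ℕ) := ∑ i ∈ Finset.range N, s i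
  have hS (N : ℕ) : |S N| ≤ B * N := by
    refine (Finset.abs_sum_le_sum_abs _ _).trans ((Finset.sum_le_sum fun i _ => hs i).trans_eq ?_)
    rw [Finset.sum_const, Finset.card_range, nsmul_eq_mul, mul_comm]
  have h_self (N : ℕ) : |S N| ≤ |ε| * |S (N / p)| + p * B := by
    have h_le := abs_sum_range_sub_sum_block_le (Nat.cast_pos.mp hp) hs N
    simp only [h, ← Finset.mul_sum] at h_le
    rw [← abs_mul]
    linarith [abs_sub_abs_le_abs_sub (S N) (ε * S (N / p))]
  refine (tendsto_zero_iff_abs_tendsto_zero _).mpr ?_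
  have hS_div (N : ℕ) : |S (N / p)| / N ≤ 1 / p * |S (N / p) / (N / p : ℕ)| := by
    rcases Nat.eq_zero_or_pos (N / p) with h_zero | h_pos
    · simp [S, h_zero]
    rw [abs_div, Nat.abs_cast, div_mul_div_comm, one_mul]
    gcongr
    exact_mod_cast Nat.mul_div_le N p
  refine tendsto_zero_of_le_mul_comp_add (M := B) (g := (· / p)) (div_nonneg (abs_nonneg ε) hp.le)
    ((div_lt_one hp).mpr hε) (Nat.tendsto_div_const_atTop (Nat.cast_pos.mp hp).ne')
    (tendsto_const_div_atTop_nhds_zero_nat (p * B)) (fun N => abs_nonneg _) (fun N => ?_)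
    fun N => ?_
  · rw [Function.comp_apply, abs_div, Nat.abs_cast]
    exact div_le_of_le_mul₀ N.cast_nonneg ((abs_nonneg _).trans (hs 0)) (hS N)
  · calc |S N / N| = |S N| / N := by rw [abs_div, Nat.abs_cast]
      _ ≤ (|ε| * |S (N / p)| + p * B) / N := by gcongr; exact h_self N
      _ = |ε| * (|S (N / p)| / N) + p * B / N := by ring
      _ ≤ |ε| * (1 / p * |S (N / p) / (N / p : ℕ)|) + p * B / N := by gcongr; exact hS_div N
      _ = |ε| / p * |S (N / p) / (N / p : ℕ)| + p * B / N := by ring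

lemma hasCesaroMean_of_sum_block {A ε : ℝ} (hε : |ε| < p) (hs : ∀ i, |s i| ≤ B)
    (h : ∀ i, ∑ r ∈ Finset.range p, s (p * i + r) = A + ε * s i) :
    HasCesaroMean s (A / (p - ε)) := by
  have h_ne : (p : ℝ) - ε ≠ 0 := (sub_pos.mpr (lt_of_abs_lt hε)).ne'
  set c := A / (p - ε) with hc
  have h_centred : HasCesaroMean (fun i => s i - c) 0 := by
    refine hasCesaroMean_zero_of_sum_block (B := B + |c|) hε
      (fun i => (abs_sub _ _).trans (by gcongr; exact hs i)) fun i => ?_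
    rw [Finset.sum_sub_distrib, h, Finset.sum_const, Finset.card_range, nsmul_eq_mul, hc]
    field_simp
    ring
  simpa using h_centred.add (hasCesaroMean_const c)

lemma hasCesaroMean_of_sum_block_swap {t : ℕ → ℝ} {A A' : ℝ} (hp : 1 < p)
    (hs : ∀ i, |s i| ≤ B) (ht : ∀ i, |t i| ≤ B)
    (hs_block : ∀ i, ∑ r ∈ Finset.range p, s (p * i + r) = A + t i)
    (ht_block : ∀ i, ∑ r ∈ Finset.range p, t (p * i + r) = A' + s i) :
    HasCesaroMean s ((p * A + A') / ((p - 1) * (p + 1))) := by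
  have hp' : (1 : ℝ) < p := by exact_mod_cast hp
  have h_sum : HasCesaroMean (fun i => s i + t i) ((A + A') / (p - 1)) := by
    refine hasCesaroMean_of_sum_block (B := B + B) (by simpa using hp')
      (fun i => (abs_add_le _ _).trans (add_le_add (hs i) (ht i))) fun i => ?_
    rw [Finset.sum_add_distrib, hs_block, ht_block]
    ring
  have h_diff : HasCesaroMean (fun i => s i + -1 * t i) ((A - A') / (p - -1)) := by
    refine hasCesaroMean_of_sum_block (B := B + B) (by simpa using hp')
      (fun i => (abs_add_le _ _).trans (add_le_add (hs i) (by simpa using ht i))) fun i => ?_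
    rw [Finset.sum_add_distrib, ← Finset.mul_sum, hs_block, ht_block]
    ring
  convert (h_sum.add h_diff).const_mul (1 / 2) using 1
  · funext i
    ring
  · have h_sub : (p : ℝ) - 1 ≠ 0 := by linarith
    have h_add : (p : ℝ) + 1 ≠ 0 := by linarith
    rw [sub_neg_eq_add]
    field_simp
    ring

end CesaroMean

section Density

lemma abs_indicator_one_le {α : Type*} (S : Set α) (x : α) :
    |S.indicator (1 : α → ℝ) x| ≤ 1 := by
  simpa using norm_indicator_le_norm_self (s := S) (1 : α → ℝ) x

lemma natCast_card_filter_eq_sum_indicator {α : Type*} (s : Finset α) (P : α → Prop)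
    [DecidablePred P] :
    ((s.filter P).card : ℝ) = ∑ i ∈ s, {i | P i}.indicator 1 i := by
  simp [Set.indicator_apply]

variable {p : ℕ} {a b : ZMod p}

/-- The indices `m` at which the ratio `T_{m+1} / T_m` of consecutive central trinomial
coefficients is `u / v`, cross-multiplied so that `v = 0` needs no separate treatment. -/
def ratioSet (a b u v : ZMod p) : Set ℕ :=
  {m | u * centralTrinomial a b m = v * centralTrinomial a b (m + 1)}

/-- The number of `m < p - 1` in `ratioSet a b u v`, as a real number. -/
noncomputable def ratioCount (a b u v : ZMod p) : ℝ :=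
  ∑ m ∈ Finset.range (p - 1), (ratioSet a b u v).indicator 1 m

lemma mem_ratioSet {u v : ZMod p} {m : ℕ} : m ∈ ratioSet a b u v ↔
    u * centralTrinomial a b m = v * centralTrinomial a b (m + 1) :=
  Iff.rfl

variable [hp : Fact p.Prime]

lemma ratioSet_mul_left {c : ZMod p} (hc : c ≠ 0) (u v : ZMod p) :
    ratioSet a b (c * u) (c * v) = ratioSet a b u v := by
  ext m
  simp only [mem_ratioSet, mul_assoc, mul_right_inj' hc]

lemma mem_ratioSet_mul_add (hT : ∀ n < p, centralTrinomial a b n ≠ 0) (u v : ZMod p) (n : ℕ)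
    {r : ℕ} (hr : r < p - 1) : p * n + r ∈ ratioSet a b u v ↔ r ∈ ratioSet a b u v := by
  rw [mem_ratioSet, mem_ratioSet, add_assoc, centralTrinomial_mul_add _ (by omega),
    centralTrinomial_mul_add _ (by omega), mul_left_comm, mul_left_comm v,
    mul_right_inj' (centralTrinomial_ne_zero hT n)]

lemma mem_ratioSet_mul_add_sub_one (u v : ZMod p) (n : ℕ) :
    p * n + (p - 1) ∈ ratioSet a b u v ↔
      n ∈ ratioSet a b (u * centralTrinomial a b (p - 1)) v := by
  have one_le : 1 ≤ p := hp.out.one_le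
  rw [mem_ratioSet, mem_ratioSet,
    show p * n + (p - 1) + 1 = p * (n + 1) by rw [mul_add]; omega, centralTrinomial_mul,
    centralTrinomial_mul_add _ (by omega), mul_assoc, mul_comm (centralTrinomial a b n)]

lemma sum_block_indicator_ratioSet (hT : ∀ n < p, centralTrinomial a b n ≠ 0) (u v : ZMod p)
    (n : ℕ) :
    ∑ r ∈ Finset.range p, (ratioSet a b u v).indicator (1 : ℕ → ℝ) (p * n + r) =
      ratioCount a b u v +
        (ratioSet a b (u * centralTrinomial a b (p - 1)) v).indicator 1 n := by
  have h_range : Finset.range p = Finset.range (p - 1 + 1) := by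
    rw [Nat.sub_one_add_one hp.out.ne_zero]
  rw [h_range, Finset.sum_range_succ, ratioCount]
  congr 1
  · refine Finset.sum_congr rfl fun r hr => ?_
    exact Set.indicator_eq_indicator (mem_ratioSet_mul_add hT u v n (Finset.mem_range.mp hr)) rfl
  · exact Set.indicator_eq_indicator (mem_ratioSet_mul_add_sub_one u v n) rfl

lemma hasCesaroMean_ratioSet (hT : ∀ n < p, centralTrinomial a b n ≠ 0) (u v : ZMod p) :
    HasCesaroMean ((ratioSet a b u v).indicator 1)
      ((p * ratioCount a b u v + ratioCount a b (u * centralTrinomial a b (p - 1)) v) /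
        ((p - 1) * (p + 1))) := by
  have h_sq := centralTrinomial_sub_one_mul_self (hT (p - 1) (Nat.sub_one_lt hp.out.ne_zero))
  refine hasCesaroMean_of_sum_block_swap hp.out.one_lt (abs_indicator_one_le _)
    (abs_indicator_one_le _) (sum_block_indicator_ratioSet hT u v) fun n => ?_
  rw [sum_block_indicator_ratioSet hT, mul_assoc, h_sq, mul_one]

lemma mem_ratioSet_reflect (hT : ∀ n < p, centralTrinomial a b n ≠ 0) (w : ZMod p) {k m : ℕ}
    (h : k + m + 1 = p - 1) :
    m ∈ ratioSet a b (discrim a b a * w) b ↔ k ∈ ratioSet a b b w := by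
  have hχ : centralTrinomial a b (p - 1) ≠ 0 := hT (p - 1) (Nat.sub_one_lt hp.out.ne_zero)
  have reflect_succ := discrim_pow_mul_centralTrinomial a b (show k + (m + 1) = p - 1 by omega)
  have reflect := discrim_pow_mul_centralTrinomial a b (show k + 1 + m = p - 1 by omega)
  have h_left : discrim a b a ^ k * (discrim a b a * w * centralTrinomial a b m) =
      centralTrinomial a b (p - 1) * (w * centralTrinomial a b (k + 1)) := by
    linear_combination w * reflect
  have h_right : discrim a b a ^ k * (b * centralTrinomial a b (m + 1)) =
      centralTrinomial a b (p - 1) * (b * centralTrinomial a b k) := by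
    linear_combination b * reflect_succ
  rw [mem_ratioSet, mem_ratioSet, ← mul_right_inj' (pow_ne_zero k (discrim_ne_zero hχ)),
    h_left, h_right, mul_right_inj' hχ, eq_comm]

lemma ratioCount_discrim_mul (hT : ∀ n < p, centralTrinomial a b n ≠ 0) (w : ZMod p) :
    ratioCount a b (discrim a b a * w) b = ratioCount a b b w := by
  rw [ratioCount, ← Finset.sum_range_reflect, ratioCount]
  refine Finset.sum_congr rfl fun k hk => ?_
  rw [Finset.mem_range] at hk
  exact Set.indicator_eq_indicator (mem_ratioSet_reflect hT w (by omega)) rfl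

lemma motzkin_mul_add_eq_zero_iff (hp2 : 2 < p) (ha : a ≠ 0)
    (hT : ∀ n < p, centralTrinomial a b n ≠ 0) (n : ℕ) {r : ℕ} (hr : r < p - 2) :
    motzkin a b (p * n + r) = 0 ↔ motzkin a b r = 0 := by
  rw [motzkin_mul_add hp2 ha n hr, mul_eq_zero_iff_left (centralTrinomial_ne_zero hT n)]

lemma motzkin_mul_add_sub_two_eq_zero_iff (hp2 : 2 < p) (ha : a ≠ 0)
    (hχ : centralTrinomial a b (p - 1) ≠ 0) (n : ℕ) :
    motzkin a b (p * n + (p - 2)) = 0 ↔ n ∈ ratioSet a b b (centralTrinomial a b (p - 1)) := by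
  rw [← mul_eq_zero_iff_left (two_mul_sq_ne_zero hp2 ha),
    two_mul_sq_mul_motzkin_mul_add_sub_two, sub_eq_zero, ← ratioSet_mul_left hχ,
    centralTrinomial_sub_one_mul_self hχ, mem_ratioSet, one_mul, mul_comm b]

lemma motzkin_mul_add_sub_one_eq_zero_iff (hp2 : 2 < p) (ha : a ≠ 0) (n : ℕ) :
    motzkin a b (p * n + (p - 1)) = 0 ↔
      n ∈ ratioSet a b (discrim a b a * centralTrinomial a b (p - 1)) b := by
  rw [← mul_eq_zero_iff_left (two_mul_sq_ne_zero hp2 ha),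
    two_mul_sq_mul_motzkin_mul_add_sub_one, sub_eq_zero, eq_comm, mem_ratioSet]

lemma sum_block_indicator_motzkin (hp2 : 2 < p) (ha : a ≠ 0)
    (hT : ∀ n < p, centralTrinomial a b n ≠ 0) (n : ℕ) :
    ∑ r ∈ Finset.range p, {n | motzkin a b n = 0}.indicator (1 : ℕ → ℝ) (p * n + r) =
      ∑ r ∈ Finset.range (p - 2), {n | motzkin a b n = 0}.indicator 1 r +
        (ratioSet a b b (centralTrinomial a b (p - 1))).indicator 1 n +
        (ratioSet a b (discrim a b a * centralTrinomial a b (p - 1)) b).indicator 1 n := by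
  have h_range : Finset.range p = Finset.range (p - 2 + 1 + 1) := by
    congr 1
    omega
  rw [h_range, Finset.sum_range_succ, Finset.sum_range_succ]
  congr 1
  · congr 1
    · refine Finset.sum_congr rfl fun r hr => Set.indicator_eq_indicator ?_ rfl
      exact motzkin_mul_add_eq_zero_iff hp2 ha hT n (Finset.mem_range.mp hr)
    · refine Set.indicator_eq_indicator ?_ rfl
      exact motzkin_mul_add_sub_two_eq_zero_iff hp2 ha (hT _ (by omega)) n
  · rw [show p - 2 + 1 = p - 1 by omega]
    exact Set.indicator_eq_indicator (motzkin_mul_add_sub_one_eq_zero_iff hp2 ha n) rfl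

theorem hasCesaroMean_motzkin_eq_zero (hp2 : 2 < p) (ha : a ≠ 0)
    (hT : ∀ n < p, centralTrinomial a b n ≠ 0) :
    HasCesaroMean ({n | motzkin a b n = 0}.indicator 1)
      ((∑ r ∈ Finset.range (p - 2), {n | motzkin a b n = 0}.indicator 1 r +
        2 * ((p * ratioCount a b b (centralTrinomial a b (p - 1)) + ratioCount a b b 1) /
          ((p - 1) * (p + 1)))) / p) := by
  set χ := centralTrinomial a b (p - 1) with χ_def
  have hχ : χ ≠ 0 := hT (p - 1) (Nat.sub_one_lt hp.out.ne_zero)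
  have h_sq : χ * χ = 1 := centralTrinomial_sub_one_mul_self hχ
  have h_scale : ratioCount a b (b * χ) χ = ratioCount a b b 1 := by
    rw [ratioCount, ratioCount, ← ratioSet_mul_left hχ b 1, mul_one, mul_comm b]
  have h_sub_two := hasCesaroMean_ratioSet hT b χ
  have h_sub_one := hasCesaroMean_ratioSet hT (discrim a b a * χ) b
  rw [← χ_def, h_scale] at h_sub_two
  rw [← χ_def, mul_assoc, h_sq, ratioCount_discrim_mul hT, ratioCount_discrim_mul hT] at h_sub_one
  refine .of_sum_block hp.out.pos (abs_indicator_one_le _) ?_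
  simp only [sum_block_indicator_motzkin hp2 ha hT]
  convert ((hasCesaroMean_const _).add h_sub_two).add h_sub_one using 1
  ring

end Density

open scoped Classical in
theorem stmt13 (p : ℕ) (hp : p.Prime) (hp2 : 2 < p) (a b : ℤ) (ha : ¬ (p : ℤ) ∣ a)
    (hT : ∀ n < p, ¬ (p : ℤ) ∣ genTrinomial a b n) :
    Tendsto
      (fun N : ℕ =>
        (((Finset.range N).filter (fun n => (p : ℤ) ∣ genMotzkin a b n)).card : ℝ) / N)
      atTop
      (nhds
        ((((Finset.range (p - 2)).filter (fun n => (p : ℤ) ∣ genMotzkin a b n)).card : ℝ) / p +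
         2 * (((Finset.range (p - 1)).filter
            (fun m => b * genTrinomial a b m ≡
              genTrinomial a b (p - 1) * genTrinomial a b (m + 1) [ZMOD (p : ℤ)])).card : ℝ) /
            (((p : ℝ) - 1) * ((p : ℝ) + 1)) +
         2 * (((Finset.range (p - 1)).filter
            (fun m => b * genTrinomial a b m ≡ genTrinomial a b (m + 1) [ZMOD (p : ℤ)])).card : ℝ) /
            (((p : ℝ) - 1) * (p : ℝ) * ((p : ℝ) + 1)))) := by
  have : Fact p.Prime := ⟨hp⟩
  simp only [← ZMod.intCast_zmod_eq_zero_iff_dvd, ← ZMod.intCast_eq_intCast_iff, Int.cast_mul,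
    intCast_genTrinomial, intCast_genMotzkin, natCast_card_filter_eq_sum_indicator] at ha hT ⊢
  have h_mean := hasCesaroMean_motzkin_eq_zero hp2 ha hT
  rw [HasCesaroMean] at h_mean
  convert h_mean using 2
  simp only [ratioCount, ratioSet, one_mul]
  have h_sub : (p : ℝ) - 1 ≠ 0 := sub_ne_zero.mpr (by exact_mod_cast hp.ne_one)
  field_simp
  ring
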